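/- Let p > 0 and q ∈ ℝ² with ‖q‖ ≤ p, and let ψ² = p·D(q/p) be the second moment given by the M₁ closure, where D(n) = ((1 − χ(‖n‖))/2)·I₂ + ((3χ(‖n‖) − 1)/2)·(nnᵀ/‖n‖²) for n ≠ 0 and D(0) = (1/3)·I₂. Then for every unit vector ν ∈ ℝ² and every s ∈ {+1, −1}, the pair (p + s ν·q, q + s ψ² ν) is realizable: p + s ν·q ≥ 0 and ‖q + s ψ² ν‖ ≤ p + s ν·q. -/

import Mathlib

open scoped InnerProductSpace Classical

/-- The Eddington factor of the M₁ model. -/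
noncomputable def eddingtonChi (f : ℝ) : ℝ :=
  (3 + 4 * f ^ 2) / (5 + 2 * Real.sqrt (4 - 3 * f ^ 2))

/-- The Eddington tensor, with `D(0) = (1/3)·I₂` and otherwise
`D(n) = ((1 − χ(‖n‖))/2)·I₂ + ((3χ(‖n‖) − 1)/2)·(nnᵀ/‖n‖²)`. -/
noncomputable def eddingtonD (n : EuclideanSpace ℝ (Fin 2)) : Matrix (Fin 2) (Fin 2) ℝ :=
  if n = 0 then (1 / 3 : ℝ) • (1 : Matrix (Fin 2) (Fin 2) ℝ)
  else
    ((1 - eddingtonChi ‖n‖) / 2) • (1 : Matrix (Fin 2) (Fin 2) ℝ) +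
      ((3 * eddingtonChi ‖n‖ - 1) / 2) • Matrix.of fun i j => n i * n j / ‖n‖ ^ 2

lemma m1_D_eq (n : EuclideanSpace ℝ (Fin 2)) (hn : ‖n‖ ≤ 1) :
    ∃ b : ℝ, 0 ≤ b ∧ ‖n‖ ^ 2 = (1 - 3 * b) * (1 + b) ∧
      ∀ i j, eddingtonD n i j = b * (if i = j then 1 else 0) + n i * n j / (1 + b) := by
  have h0 : 0 ≤ ‖n‖ := norm_nonneg n
  have hf : ‖n‖ ^ 2 ≤ 1 := by nlinarith
  obtain ⟨r, hr⟩ : ∃ r, r = Real.sqrt (4 - 3 * ‖n‖ ^ 2) := ⟨_, rfl⟩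
  have hr2 : r ^ 2 = 4 - 3 * ‖n‖ ^ 2 := by
    rw [hr]; exact Real.sq_sqrt (by linarith)
  have hr1 : 1 ≤ r := by
    rw [hr]; exact Real.one_le_sqrt.mpr (by linarith)
  have hfr : ‖n‖ ^ 2 = (4 - r ^ 2) / 3 := by linarith
  refine ⟨(r - 1) / 3, by linarith, by rw [hfr]; ring, ?_⟩
  intro i j
  have hchi : eddingtonChi ‖n‖ = (5 - 2 * r) / 3 := by
    unfold eddingtonChi
    rw [← hr, hfr]
    have : (5 + 2 * r) ≠ 0 := by linarith
    field_simp
    ring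
  by_cases hz : n = 0
  · have h2 : r = 2 := by
      have : r ^ 2 = 4 := by rw [hr2, hz]; simp
      nlinarith
    subst hz
    simp only [eddingtonD, if_true, h2, Matrix.smul_apply, Matrix.one_apply, smul_eq_mul,
      PiLp.zero_apply]
    norm_num
  · have hne : ‖n‖ ^ 2 ≠ 0 := pow_ne_zero _ (norm_ne_zero_iff.mpr hz)
    simp only [eddingtonD, if_neg hz, hchi, Matrix.smul_apply, Matrix.one_apply, smul_eq_mul,
      Matrix.add_apply, Matrix.of_apply]
    have hne' : (4 - r ^ 2) ≠ 0 := by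
      intro h; apply hne; rw [hfr, h]; simp
    have h3 : (1 + (r - 1) / 3) ≠ 0 := by linarith
    have key : (3 * ((5 - 2 * r) / 3) - 1) / 2 * (n i * n j / ‖n‖ ^ 2)
        = n i * n j / (1 + (r - 1) / 3) := by
      rw [← mul_div_assoc, div_eq_div_iff hne h3, hfr]
      ring
    rw [key]
    ring

/-- Let `p > 0`, `‖q‖ ≤ p`, and let `ψ² = p·D(q/p)` be the second moment of the M₁ closure.
Then for every unit vector `ν` and sign `s = ±1`, the pair `(p + s ν·q, q + s ψ² ν)` is
realizable. -/
theorem m1_closure_realizable (p : ℝ) (hp : 0 < p) (q : EuclideanSpace ℝ (Fin 2))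
    (hq : ‖q‖ ≤ p) (ν : EuclideanSpace ℝ (Fin 2)) (hν : ‖ν‖ = 1) (s : ℝ)
    (hs : s = 1 ∨ s = -1) :
    0 ≤ p + s * ⟪ν, q⟫_ℝ ∧
    ‖q + s • (EuclideanSpace.equiv (Fin 2) ℝ).symm ((p • eddingtonD (p⁻¹ • q)).mulVec ν)‖
      ≤ p + s * ⟪ν, q⟫_ℝ := by
  have hn : ‖p⁻¹ • q‖ ≤ 1 := by
    rw [norm_smul, Real.norm_of_nonneg (inv_nonneg.mpr hp.le), inv_mul_le_iff₀ hp]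
    simpa using hq
  obtain ⟨b, hb, hf, hD⟩ := m1_D_eq _ hn
  obtain ⟨n, hnq⟩ : ∃ n, n = p⁻¹ • q := ⟨_, rfl⟩
  rw [← hnq] at hn hf hD ⊢
  have hqn : q = p • n := by rw [hnq, smul_inv_smul₀ hp.ne']
  have hs2 : s ^ 2 = 1 := by rcases hs with h | h <;> simp [h]
  have hpos : 0 ≤ p + s * ⟪ν, q⟫_ℝ := by
    have := abs_real_inner_le_norm ν q
    rw [hν, one_mul] at this
    have h1 := abs_le.mp (this.trans hq)
    rcases hs with h | h <;> rw [h] <;> linarith [h1.1, h1.2]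
  refine ⟨hpos, ?_⟩
  apply abs_le_of_sq_le_sq' _ hpos |>.2
  have hν2 : ν 0 ^ 2 + ν 1 ^ 2 = 1 := by
    have := EuclideanSpace.real_norm_sq_eq ν
    rw [hν, Fin.sum_univ_two] at this
    linarith
  rw [EuclideanSpace.real_norm_sq_eq, Fin.sum_univ_two] at hf
  rw [EuclideanSpace.real_norm_sq_eq, Fin.sum_univ_two]
  have hin : ⟪ν, q⟫_ℝ = p * (ν 0 * n 0 + ν 1 * n 1) := by
    rw [hqn]
    simp [PiLp.inner_apply, Fin.sum_univ_two]
    ring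
  rw [hin, hqn]
  obtain ⟨k, hk⟩ : ∃ k, k = (1 + b)⁻¹ := ⟨_, rfl⟩
  have hk1 : k * (1 + b) = 1 := by rw [hk]; exact inv_mul_cancel₀ (by linarith)
  have hk0 : 0 ≤ k := by rw [hk]; positivity
  simp only [PiLp.add_apply, PiLp.smul_apply, smul_eq_mul, EuclideanSpace.equiv,
    PiLp.continuousLinearEquiv_symm_apply, Matrix.mulVec, dotProduct,
    Fin.sum_univ_two, Matrix.smul_apply, hD, div_eq_mul_inv, ← hk]
  simp only [if_true, Fin.isValue, zero_ne_one, one_ne_zero, if_false, mul_one, mul_zero, zero_add]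
  generalize n 0 = x at *
  generalize n 1 = y at *
  generalize ν 0 = u at *
  generalize ν 1 = v at *
  obtain ⟨t, ht⟩ : ∃ t, t = s * (u * x + v * y) := ⟨_, rfl⟩
  have e1 : (p * x + s * (p * (b + x * x * k) * u + p * (x * y * k) * v)) ^ 2 +
      (p * y + s * (p * (y * x * k) * u + p * (b + y * y * k) * v)) ^ 2
      = p ^ 2 * ((x ^ 2 + y ^ 2) * (1 + t * k) ^ 2 + 2 * b * t * (1 + t * k)
        + s ^ 2 * b ^ 2 * (u ^ 2 + v ^ 2)) := by
    rw [ht]; ring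
  have e2 : (p + s * (p * (u * x + v * y))) ^ 2 = p ^ 2 * (1 + t) ^ 2 := by rw [ht]; ring
  rw [e1, e2, hf, hs2, hν2]
  apply mul_le_mul_of_nonneg_left _ (sq_nonneg p)
  have e3 : (1 + t) ^ 2 - ((1 - 3 * b) * (1 + b) * (1 + t * k) ^ 2 + 2 * b * t * (1 + t * k)
        + 1 * b ^ 2 * 1) = 2 * b * k * (1 + b + t) ^ 2 := by
    have hb1 : (1 + b) ≠ 0 := by linarith
    rw [hk]
    field_simp
    ring
  have : 0 ≤ 2 * b * k * (1 + b + t) ^ 2 := by positivity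
  linarith
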